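/- Let n ≥ 1. For every integer j ≥ 0, the number of cyclically alternating permutations σ of {1,…,2n} with cswap(σ) = j equals the number of linear extensions π of the naturally labeled crown poset C̃_{2n} with des(π) = j. Equivalently, Σ_{σ ∈ CA_{2n}} t^{cswap(σ)} = Σ_{π ∈ JH(C̃_{2n})} t^{des(π)} as polynomials. -/

import Mathlib

/-- The cyclic successor of an index/value in `Fin m` (i.e. `i + 1 mod m`). -/
def cyclicSucc {m : ℕ} (i : Fin m) : Fin m := ⟨((i : ℕ) + 1) % m, Nat.mod_lt _ i.pos⟩

/-- `σ` (a permutation of `{0,…,2n−1}`, standing for `{1,…,2n}`) is cyclically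
alternating: `σ_1 < σ_2 > σ_3 < ⋯ > σ_{2n−1} < σ_{2n} > σ_1` (0-indexed, with
indices taken cyclically). -/
def IsCAP {n : ℕ} (σ : Equiv.Perm (Fin (2 * n))) : Prop :=
  ∀ i : Fin (2 * n),
    (Even (i : ℕ) → σ i < σ (cyclicSucc i)) ∧ (Odd (i : ℕ) → σ (cyclicSucc i) < σ i)

/-- The cyclic swap set of `σ`: values `k` (with `k+1` also a value, i.e.
`k ∈ {1,…,2n−1}` in 1-indexed terms) such that `σ⁻¹(k) > σ⁻¹(k+1) + 1`. -/
def CSwapSet {n : ℕ} (σ : Equiv.Perm (Fin (2 * n))) : Set (Fin (2 * n)) :=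
  {k | (k : ℕ) + 1 < 2 * n ∧
    ((σ⁻¹ (cyclicSucc k) : Fin (2 * n)) : ℕ) + 1 < ((σ⁻¹ k : Fin (2 * n)) : ℕ)}

/-- The cyclic swap statistic `cswap(σ)`. -/
noncomputable def cswap {n : ℕ} (σ : Equiv.Perm (Fin (2 * n))) : ℕ := (CSwapSet σ).ncard

/-- Cover relations of the naturally labeled crown poset `C̃_{2n}` on `{1,…,2n}`:
`i ≺ n+i` for `1 ≤ i ≤ n`, `i+1 ≺ n+i` for `1 ≤ i ≤ n−1`, and `1 ≺ 2n`. -/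
def natCrownCover (n x y : ℕ) : Prop :=
  (∃ i, 1 ≤ i ∧ i ≤ n ∧ x = i ∧ y = n + i) ∨
  (∃ i, 1 ≤ i ∧ i ≤ n - 1 ∧ x = i + 1 ∧ y = n + i) ∨
  (x = 1 ∧ y = 2 * n)

/-- The order relation of the naturally labeled crown poset `C̃_{2n}`. -/
def natCrownLe (n x y : ℕ) : Prop := x = y ∨ natCrownCover n x y

/-- `π` is a linear extension of the naturally labeled crown poset `C̃_{2n}`
(the permutation of `{0,…,2n−1}` stands for the word `π_1 ⋯ π_{2n}` on
`{1,…,2n}` via `+1`): `π_p ⪯ π_q` implies `p ≤ q`. -/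
def IsLinExtCrown {n : ℕ} (π : Equiv.Perm (Fin (2 * n))) : Prop :=
  ∀ p q : Fin (2 * n), natCrownLe n ((π p : ℕ) + 1) ((π q : ℕ) + 1) → p ≤ q

/-- The descent number of `π`. -/
noncomputable def des {n : ℕ} (π : Equiv.Perm (Fin (2 * n))) : ℕ :=
  Set.ncard {i : Fin (2 * n) | (i : ℕ) + 1 < 2 * n ∧ π (cyclicSucc i) < π i}

/-!
Reading a cyclically alternating `σ` as a labeling of positions, `IsCAP σ` says that `σ` is a
natural labeling of the zigzag order on the cycle of positions, whose minimal elements are the even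
positions (0-indexed). This order is the crown, and both statistics are descent numbers of the words
`ω ∘ σ⁻¹` for two natural labelings `ω` of it: for `cswap`, `ω` exchanges positions `2i - 1` and
`2i`; for `des`, it lists the even positions before the odd ones.

The distribution of descent sets does not depend on the natural labeling `ω`. Any two natural
labelings are joined by exchanging consecutive labels `ω x ⋖ ω y` of unrelated elements `x`, `y`,
and such an exchange is compensated by the involution on the `σ`s that exchanges `x` and `y` when
they are adjacent in the word.
-/

section NaturalLabeling

variable {P ι α : Type*} {r : P → P → Prop}

/-- A natural labeling of the poset generated by the relation `r`. A linear extension is the same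
notion seen from the other side: `σ : P ≃ ι` is natural when the word `σ.symm` lists the elements
of `P` compatibly with `r`. -/
def IsNaturalLabeling [LT α] (r : P → P → Prop) (ω : P ≃ α) : Prop :=
  ∀ ⦃x y⦄, r x y → ω x < ω y

/-- The descent set of a word `w`, whose positions may be any ordered type. -/
def descents [LT ι] [LT α] (w : ι → α) : Set ι :=
  {i | ∃ j, i ⋖ j ∧ w j < w i}

/-- The labeling obtained from `ω` by exchanging the labels of `x` and `y`. -/
def swapLabels [DecidableEq α] (x y : P) (ω : P ≃ α) : P ≃ α :=
  ω.trans (Equiv.swap (ω x) (ω y))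

open Classical in
/-- The toggle of the word `σ.symm` at `x` and `y`: exchange these two letters if they are adjacent,
and otherwise do nothing. -/
noncomputable def toggle [LinearOrder ι] (x y : P) (σ : P ≃ ι) : P ≃ ι :=
  if σ x ⋖ σ y ∨ σ y ⋖ σ x then swapLabels x y σ else σ

@[simp]
lemma swapLabels_apply [DecidableEq α] (x y z : P) (ω : P ≃ α) :
    swapLabels x y ω z = Equiv.swap (ω x) (ω y) (ω z) :=
  rfl

@[simp]
lemma swapLabels_symm_apply [DecidableEq α] (x y : P) (ω : P ≃ α) (a : α) :
    (swapLabels x y ω).symm a = ω.symm (Equiv.swap (ω x) (ω y) a) :=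
  rfl

lemma swapLabels_comm [DecidableEq α] (x y : P) (ω : P ≃ α) :
    swapLabels x y ω = swapLabels y x ω := by
  simp only [swapLabels, Equiv.swap_comm]

lemma swapLabels_involutive [DecidableEq α] (x y : P) :
    Function.Involutive (swapLabels (α := α) x y) := by
  intro ω
  ext z
  simp [Equiv.swap_comm (ω y)]

lemma toggle_involutive [LinearOrder ι] (x y : P) : Function.Involutive (toggle (ι := ι) x y) := by
  intro σ
  by_cases h : σ x ⋖ σ y ∨ σ y ⋖ σ x
  · have h' : swapLabels x y σ x ⋖ swapLabels x y σ y ∨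
        swapLabels x y σ y ⋖ swapLabels x y σ x := by
      simpa using h.symm
    rw [toggle, toggle, if_pos h, if_pos h', swapLabels_involutive]
  · rw [toggle, toggle, if_neg h, if_neg h]

lemma swap_lt_swap_of_covBy [LinearOrder α] {a b c d : α} (hab : a ⋖ b) (hcd : c < d)
    (hne : ¬(c = a ∧ d = b)) : Equiv.swap a b c < Equiv.swap a b d := by
  have hlt := hab.lt
  have hge (e : α) (he : a < e) : b ≤ e := hab.ge_of_gt he
  have hle (e : α) (he : e < b) : e ≤ a := hab.le_of_lt he
  grind

lemma swap_lt_swap_iff_of_covBy [LinearOrder α] {a b c d : α} (hab : a ⋖ b)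
    (hne : ¬(c = a ∧ d = b)) (hne' : ¬(c = b ∧ d = a)) :
    Equiv.swap a b c < Equiv.swap a b d ↔ c < d := by
  refine ⟨fun h ↦ ?_, fun h ↦ swap_lt_swap_of_covBy hab h hne⟩
  have hne_swap : ¬(Equiv.swap a b c = a ∧ Equiv.swap a b d = b) := by
    simpa [Equiv.swap_apply_eq_iff] using hne'
  simpa using swap_lt_swap_of_covBy hab h hne_swap

lemma IsNaturalLabeling.swapLabels [LinearOrder α] {ω : P ≃ α} (hω : IsNaturalLabeling r ω)
    {x y : P} (hxy : ω x ⋖ ω y) (hr : ¬r x y) : IsNaturalLabeling r (swapLabels x y ω) := by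
  intro u v huv
  refine swap_lt_swap_of_covBy hxy (hω huv) ?_
  rintro ⟨hu, hv⟩
  rw [ω.injective hu, ω.injective hv] at huv
  exact hr huv

lemma IsNaturalLabeling.toggle [LinearOrder ι] {σ : P ≃ ι} (hσ : IsNaturalLabeling r σ) {x y : P}
    (hxy : ¬r x y) (hyx : ¬r y x) : IsNaturalLabeling r (toggle x y σ) := by
  rw [_root_.toggle]
  split_ifs with hadj
  · rcases hadj with hcov | hcov
    · exact hσ.swapLabels hcov hxy
    · rw [swapLabels_comm]
      exact hσ.swapLabels hcov hyx
  · exact hσ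

lemma isNaturalLabeling_toggle_iff [LinearOrder ι] {σ : P ≃ ι} {x y : P} (hxy : ¬r x y)
    (hyx : ¬r y x) : IsNaturalLabeling r (toggle x y σ) ↔ IsNaturalLabeling r σ :=
  ⟨fun h ↦ toggle_involutive x y σ ▸ h.toggle hxy hyx, fun h ↦ h.toggle hxy hyx⟩

lemma descents_swap_comp [LT ι] [LinearOrder α] {w : ι → α} {a b : α} (hab : a ⋖ b)
    (hw : ∀ i j, w i = a → w j = b → ¬(i ⋖ j ∨ j ⋖ i)) :
    descents (Equiv.swap a b ∘ w) = descents w := by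
  ext i
  refine exists_congr fun j ↦ and_congr_right fun hij ↦ swap_lt_swap_iff_of_covBy hab ?_ ?_
  · rintro ⟨hj, hi⟩
    exact hw j i hj hi (Or.inr hij)
  · rintro ⟨hj, hi⟩
    exact hw i j hi hj (Or.inl hij)

lemma descents_swapLabels_comp_symm [LinearOrder ι] [LinearOrder α] {ω : P ≃ α} {x y : P}
    (hxy : ω x ⋖ ω y) (σ : P ≃ ι) :
    descents (swapLabels x y ω ∘ σ.symm) = descents (ω ∘ (toggle x y σ).symm) := by
  by_cases hadj : σ x ⋖ σ y ∨ σ y ⋖ σ x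
  · congr 1
    ext i
    simpa [toggle, hadj] using
      ((σ.symm.trans ω).injective.map_swap (x := σ x) (y := σ y) (z := i)).symm
  · rw [toggle, if_neg hadj]
    refine descents_swap_comp (w := ω ∘ σ.symm) hxy ?_
    intro i j hi hj
    rwa [σ.symm_apply_eq.1 (ω.injective hi), σ.symm_apply_eq.1 (ω.injective hj)]

lemma ncard_isNaturalLabeling_descents_swapLabels [LinearOrder ι] [LinearOrder α] {ω : P ≃ α}
    {x y : P} (hcov : ω x ⋖ ω y) (hxy : ¬r x y) (hyx : ¬r y x) (p : Set ι → Prop) :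
    {σ : P ≃ ι | IsNaturalLabeling r σ ∧ p (descents (swapLabels x y ω ∘ σ.symm))}.ncard =
      {σ : P ≃ ι | IsNaturalLabeling r σ ∧ p (descents (ω ∘ σ.symm))}.ncard := by
  have hpre : {σ : P ≃ ι | IsNaturalLabeling r σ ∧ p (descents (swapLabels x y ω ∘ σ.symm))} =
      toggle x y ⁻¹' {σ | IsNaturalLabeling r σ ∧ p (descents (ω ∘ σ.symm))} := by
    ext σ
    simp only [Set.mem_ofPred_eq, Set.mem_preimage, isNaturalLabeling_toggle_iff hxy hyx,
      descents_swapLabels_comp_symm hcov]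
  have hinv : Function.Involutive (toggle (ι := ι) x y) := toggle_involutive x y
  rw [hpre, Set.ncard_preimage_of_injective_subset_range hinv.injective]
  simp [hinv.surjective.range_eq]

lemma eq_of_descents_comp_symm_eq_empty [LinearOrder α] [Finite α] {ω ω' : P ≃ α}
    (h : descents (ω' ∘ ω.symm) = ∅) : ω = ω' := by
  have := Fintype.ofFinite α
  have := Fintype.toLocallyFiniteOrder (α := α)
  have hmono : StrictMono (ω.symm.trans ω') := by
    refine ((monotone_iff_forall_covBy _).2 fun a b hab ↦ ?_).strictMono_of_injective
      (Equiv.injective _)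
    by_contra! hlt
    exact Set.eq_empty_iff_forall_notMem.1 h a ⟨b, hab, hlt⟩
  have hid : hmono.orderIsoOfSurjective _ (Equiv.surjective _) = OrderIso.refl α :=
    Subsingleton.elim _ _
  ext x
  simpa using (DFunLike.congr_fun hid (ω x)).symm

theorem ncard_isNaturalLabeling_descents_eq [LinearOrder ι] [LinearOrder α] [Finite α]
    {ω ω' : P ≃ α} (hω : IsNaturalLabeling r ω) (hω' : IsNaturalLabeling r ω') (p : Set ι → Prop) :
    {σ : P ≃ ι | IsNaturalLabeling r σ ∧ p (descents (ω ∘ σ.symm))}.ncard =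
      {σ : P ≃ ι | IsNaturalLabeling r σ ∧ p (descents (ω' ∘ σ.symm))}.ncard := by
  -- Exchanging the labels at a descent of `ω' ∘ ω.symm` makes that word lexicographically smaller.
  induction hlex : toLex (ω' ∘ ω.symm) using WellFoundedLT.induction generalizing ω with
  | ind _ ih =>
    subst hlex
    rcases (descents (ω' ∘ ω.symm)).eq_empty_or_nonempty with hempty | ⟨a, b, hab, hlt⟩
    · rw [eq_of_descents_comp_symm_eq_empty hempty]
    obtain ⟨x, rfl⟩ := ω.surjective a
    obtain ⟨y, rfl⟩ := ω.surjective b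
    have hxy : ¬r x y := fun h ↦ (hω' h).asymm (by simpa using hlt)
    have hyx : ¬r y x := fun h ↦ (hω h).asymm hab.lt
    rw [← ncard_isNaturalLabeling_descents_swapLabels hab hxy hyx]
    exact ih _ (Pi.lex_desc hab.le hlt) (hω.swapLabels hab hxy) rfl

end NaturalLabeling

section Crown

variable {n : ℕ}

/-- The crown order on the cyclic positions `0, …, 2n - 1`: each even position lies below both of
its neighbours. -/
def cyclicZigzag (p q : Fin (2 * n)) : Prop :=
  Even (p : ℕ) ∧ (q = cyclicSucc p ∨ p = cyclicSucc q)

lemma val_cyclicSucc {m : ℕ} (i : Fin m) :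
    ((cyclicSucc i : Fin m) : ℕ) = if (i : ℕ) + 1 = m then 0 else (i : ℕ) + 1 := by
  split_ifs with hi
  · simp [cyclicSucc, hi]
  · exact Nat.mod_eq_of_lt (by omega)

lemma covBy_iff_eq_cyclicSucc {m : ℕ} {i j : Fin m} :
    i ⋖ j ↔ (i : ℕ) + 1 < m ∧ j = cyclicSucc i := by
  rw [Fin.covBy_iff, Nat.covBy_iff_add_one_eq, Fin.ext_iff, val_cyclicSucc]
  split_ifs <;> omega

lemma descents_eq_setOf_cyclicSucc {m : ℕ} {α : Type*} [LT α] (w : Fin m → α) :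
    descents w = {i : Fin m | (i : ℕ) + 1 < m ∧ w (cyclicSucc i) < w i} := by
  ext i
  simp only [descents, Set.mem_ofPred_eq, covBy_iff_eq_cyclicSucc, and_assoc, exists_and_left,
    exists_eq_left]

lemma des_eq_ncard_descents (π : Equiv.Perm (Fin (2 * n))) : des π = (descents π).ncard := by
  rw [des, descents_eq_setOf_cyclicSucc]

lemma even_cyclicSucc_iff (i : Fin (2 * n)) : 
    Even ((cyclicSucc i : Fin (2 * n)) : ℕ) ↔ Odd (i : ℕ) := by
  rw [val_cyclicSucc, Nat.even_iff, Nat.odd_iff]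
  split_ifs <;> omega

lemma isCAP_iff_isNaturalLabeling (σ : Equiv.Perm (Fin (2 * n))) :
    IsCAP σ ↔ IsNaturalLabeling cyclicZigzag σ := by
  constructor
  · rintro h p q ⟨hp, rfl | rfl⟩
    · exact (h p).1 hp
    · exact (h q).2 ((even_cyclicSucc_iff q).1 hp)
  · exact fun h i ↦ ⟨fun hi ↦ h ⟨hi, Or.inl rfl⟩,
      fun hi ↦ h ⟨(even_cyclicSucc_iff i).2 hi, Or.inr rfl⟩⟩

lemma cyclicZigzag_iff_val (p q : Fin (2 * n)) :
    cyclicZigzag p q ↔ (p : ℕ) % 2 = 0 ∧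
      ((q : ℕ) = p + 1 ∨ (p : ℕ) = q + 1 ∨ ((p : ℕ) = 0 ∧ (q : ℕ) + 1 = 2 * n)) := by
  rw [cyclicZigzag, Nat.even_iff, Fin.ext_iff, Fin.ext_iff, val_cyclicSucc, val_cyclicSucc]
  split_ifs <;> omega

/-- The natural labeling of `cyclicZigzag` for which `cswap` is a descent number: it exchanges the
positions `2i - 1` and `2i` and fixes `0` and `2n - 1`. -/
def exchangeLabeling (n : ℕ) : Equiv.Perm (Fin (2 * n)) :=
  Function.Involutive.toPerm
    (fun p ↦ ⟨if (p : ℕ) % 2 = 0 then p - 1 else if (p : ℕ) + 1 = 2 * n then p else p + 1,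
      by grind⟩)
    (fun p ↦ by grind)

lemma exchangeLabeling_val (p : Fin (2 * n)) :
    (exchangeLabeling n p : ℕ) =
      if (p : ℕ) % 2 = 0 then (p : ℕ) - 1 else if (p : ℕ) + 1 = 2 * n then (p : ℕ) else p + 1 :=
  rfl

lemma isNaturalLabeling_exchangeLabeling :
    IsNaturalLabeling cyclicZigzag (exchangeLabeling n) := by
  intro p q hpq
  rw [cyclicZigzag_iff_val] at hpq
  rw [Fin.lt_def, exchangeLabeling_val, exchangeLabeling_val]
  split_ifs <;> omega

lemma exchangeLabeling_lt_iff {p q : Fin (2 * n)} (hpq : ¬cyclicZigzag p q) :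
    exchangeLabeling n p < exchangeLabeling n q ↔ (p : ℕ) + 1 < q := by
  rw [cyclicZigzag_iff_val] at hpq
  rw [Fin.lt_def, exchangeLabeling_val, exchangeLabeling_val]
  split_ifs <;> omega

lemma cswap_eq_ncard_descents {σ : Equiv.Perm (Fin (2 * n))}
    (hσ : IsNaturalLabeling cyclicZigzag σ) :
    cswap σ = (descents (exchangeLabeling n ∘ σ.symm)).ncard := by
  have hswap : CSwapSet σ = descents (exchangeLabeling n ∘ σ.symm) := by
    rw [descents_eq_setOf_cyclicSucc]
    ext k
    refine and_congr_right fun hk ↦ (exchangeLabeling_lt_iff fun h ↦ ?_).symm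
    have hlt : k < cyclicSucc k := (covBy_iff_eq_cyclicSucc.2 ⟨hk, rfl⟩).lt
    exact hlt.asymm (by simpa using hσ h)
  rw [cswap, hswap]

/-- The labeling of `cyclicZigzag` that identifies it with the naturally labeled crown poset:
`0, 2, 4, …` are labeled first, then `1, 3, 5, …`. -/
noncomputable def crownLabeling (n : ℕ) : Equiv.Perm (Fin (2 * n)) :=
  Equiv.ofBijective
    (fun p ↦ ⟨if (p : ℕ) % 2 = 0 then p / 2 else n + p / 2, by grind⟩)
    (Finite.injective_iff_bijective.1 fun p q h ↦ by grind)

lemma crownLabeling_val (p : Fin (2 * n)) :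
    (crownLabeling n p : ℕ) = if (p : ℕ) % 2 = 0 then (p : ℕ) / 2 else n + (p : ℕ) / 2 :=
  rfl

lemma isNaturalLabeling_crownLabeling : IsNaturalLabeling cyclicZigzag (crownLabeling n) := by
  intro p q hpq
  rw [cyclicZigzag_iff_val] at hpq
  rw [Fin.lt_def, crownLabeling_val, crownLabeling_val]
  split_ifs <;> omega

lemma natCrownCover_crownLabeling_iff (p q : Fin (2 * n)) :
    natCrownCover n (crownLabeling n p + 1) (crownLabeling n q + 1) ↔ cyclicZigzag p q := by
  rw [cyclicZigzag_iff_val, crownLabeling_val, crownLabeling_val]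
  constructor
  · rintro (⟨i, hi⟩ | ⟨i, hi⟩ | hi) <;> split_ifs at hi <;> omega
  · rintro ⟨hp, hq | hq | hq⟩
    · exact Or.inl ⟨p / 2 + 1, by split_ifs <;> omega⟩
    · exact Or.inr (Or.inl ⟨p / 2, by split_ifs <;> omega⟩)
    · exact Or.inr (Or.inr (by split_ifs <;> omega))

lemma isLinExtCrown_crownLabeling_mul_inv_iff (σ : Equiv.Perm (Fin (2 * n))) :
    IsLinExtCrown (crownLabeling n * σ⁻¹) ↔ IsNaturalLabeling cyclicZigzag σ := by
  constructor
  · intro h p q hpq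
    have hle : σ p ≤ σ q :=
      h _ _ (Or.inr (by simpa using (natCrownCover_crownLabeling_iff p q).2 hpq))
    refine hle.lt_of_ne (σ.injective.ne ?_)
    rintro rfl
    exact (isNaturalLabeling_crownLabeling hpq).false
  · rintro h i j (heq | hcover)
    · exact ((crownLabeling n * σ⁻¹).injective (Fin.ext (Nat.succ_injective heq))).le
    · simpa using (h ((natCrownCover_crownLabeling_iff _ _).1 hcover)).le

end Crown

/-- Corollary 5.13: the statistic `cswap` on cyclically alternating permutations
is equidistributed with the descent statistic on linear extensions of the
naturally labeled crown poset. -/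
theorem cswap_des_equidistribution (n : ℕ) (hn : 1 ≤ n) (j : ℕ) :
    {σ : Equiv.Perm (Fin (2 * n)) | IsCAP σ ∧ cswap σ = j}.ncard
      = {π : Equiv.Perm (Fin (2 * n)) | IsLinExtCrown π ∧ des π = j}.ncard := by
  have hcap : {σ : Equiv.Perm (Fin (2 * n)) | IsCAP σ ∧ cswap σ = j} =
      {σ | IsNaturalLabeling cyclicZigzag σ ∧
        (descents (exchangeLabeling n ∘ σ.symm)).ncard = j} := by
    ext σ
    rw [Set.mem_ofPred_eq, isCAP_iff_isNaturalLabeling]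
    exact and_congr_right fun hσ ↦ by rw [cswap_eq_ncard_descents hσ]
  have hlin : {σ : Equiv.Perm (Fin (2 * n)) | IsNaturalLabeling cyclicZigzag σ ∧
        (descents (crownLabeling n ∘ σ.symm)).ncard = j} =
      (crownLabeling n * ·⁻¹) ⁻¹' {π | IsLinExtCrown π ∧ des π = j} := by
    ext σ
    simp only [Set.mem_preimage, Set.mem_ofPred_eq, isLinExtCrown_crownLabeling_mul_inv_iff,
      des_eq_ncard_descents]
    rfl
  have hbij : Function.Bijective fun σ : Equiv.Perm (Fin (2 * n)) ↦ crownLabeling n * σ⁻¹ :=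
    (Group.mulLeft_bijective _).comp inv_involutive.bijective
  rw [hcap, ncard_isNaturalLabeling_descents_eq isNaturalLabeling_exchangeLabeling
    isNaturalLabeling_crownLabeling (·.ncard = j), hlin,
    Set.ncard_preimage_of_injective_subset_range hbij.injective
      (by simp [hbij.surjective.range_eq])]
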